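/- Let C > 1, M > 0, T > 0, and let K ⊂ ℝ be compact. Suppose u, v : ℝ × [0,T] → ℝ are infinitely differentiable functions satisfying the PDE w_t = -w·∂ₓ⁵w (each of u and v in place of w) on ℝ × [0,T], with 1/C ≤ u(x,t) ≤ C and 1/C ≤ v(x,t) ≤ C for all (x,t), with |∂ₜu(x,t)| ≤ M and |∂ₓ⁵v(x,t)| ≤ M for all (x,t), with u(x,0) = v(x,0) for all x, and such that for every t ∈ [0,T] the function x ↦ u(x,t) - v(x,t) vanishes outside K. Then u = v on ℝ × [0,T]. -/

import Mathlib

/-!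
Energy argument. With `w = u - v` and `E(t) = ∫ w² / u dx`, taken over an interval `[-R, R]` whose
interior contains `K`, the two equations give
`∂ₜ(w² / u) = -2 w ∂ₓ⁵w + (-2 ∂ₓ⁵v - ∂ₜu / u) (w² / u)`.
The first term integrates to zero because `w ∂ₓ⁵w` is an exact derivative
(`integral_mul_iteratedDeriv_five_eq_zero`), and the bracket is at most `L = 2M + MC`, so `E' ≤ L E`
on the open interval `(0, T)`. Hence `exp(-L t) E(t)` is nonincreasing on `[0, T]`; it vanishes at
`t = 0` and is nonnegative, so `E ≡ 0` and therefore `w ≡ 0`.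

The time derivatives in the hypotheses are two-sided and may take junk values at `t = 0` and
`t = T`; only their values at interior times enter, together with continuity of `E` on `[0, T]`.
-/

open Set MeasureTheory Topology

/-- The skew-symmetry of `∂ₓ⁵`: `w w⁽⁵⁾` is the derivative of `w w⁽⁴⁾ - w' w⁽³⁾ + (w'')² / 2`, whose
boundary values vanish as soon as `w` vanishes near both endpoints. -/
lemma integral_mul_iteratedDeriv_five_eq_zero {w : ℝ → ℝ} (hw : ContDiff ℝ (⊤ : ℕ∞) w) {a b : ℝ}
    (ha : w =ᶠ[𝓝 a] fun _ => 0) (hb : w =ᶠ[𝓝 b] fun _ => 0) :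
    ∫ x in a..b, w x * iteratedDeriv 5 w x = 0 := by
  have hd : ∀ n x, HasDerivAt (iteratedDeriv n w) (iteratedDeriv (n + 1) w x) x := by
    intro n x
    rw [iteratedDeriv_succ]
    refine (hw.differentiable_iteratedDeriv n ?_ x).hasDerivAt
    exact_mod_cast WithTop.coe_lt_top n
  have hc : ∀ n, Continuous (iteratedDeriv n w) := fun n =>
    continuous_iff_continuousAt.2 fun x => (hd n x).continuousAt
  have hz : ∀ c, (w =ᶠ[𝓝 c] fun _ => 0) → ∀ n, iteratedDeriv n w c = 0 := by
    intro c h n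
    rw [h.iteratedDeriv_eq n]
    simp
  have h0 : iteratedDeriv 0 w = w := iteratedDeriv_zero
  have key := intervalIntegral.integral_eq_sub_of_hasDerivAt (a := a) (b := b)
    (f := fun x => iteratedDeriv 0 w x * iteratedDeriv 4 w x
      - iteratedDeriv 1 w x * iteratedDeriv 3 w x + iteratedDeriv 2 w x * iteratedDeriv 2 w x / 2)
    (f' := fun x => iteratedDeriv 0 w x * iteratedDeriv 5 w x) ?_ ?_
  · rw [h0] at key
    rw [key]
    simp [hz a ha, hz b hb, ha.self_of_nhds, hb.self_of_nhds]
  · intro x _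
    have := (((hd 0 x).mul (hd 4 x)).sub ((hd 1 x).mul (hd 3 x))).add
      (((hd 2 x).mul (hd 2 x)).div_const 2)
    refine this.congr_deriv ?_
    norm_num
    ring
  · exact ((hc 0).mul (hc 5)).intervalIntegrable _ _

/-- Uniqueness for smooth, uniformly bounded-away-from-zero solutions of the
fifth-order NDE `u_t = -u·u_xxxxx` on `ℝ × [0,T]`, whose difference is compactly
supported in space: if `u` and `v` agree at `t = 0`, they agree on all of `ℝ × [0,T]`. -/
theorem uniqueness_smooth_solutions_NDE50
    (C M T : ℝ) (hC : 1 < C) (hM : 0 < M) (hT : 0 < T)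
    (K : Set ℝ) (hK : IsCompact K)
    (u v : ℝ → ℝ → ℝ)
    (hu : ContDiffOn ℝ (⊤ : ℕ∞) (Function.uncurry u) (Set.univ ×ˢ Set.Icc 0 T))
    (hv : ContDiffOn ℝ (⊤ : ℕ∞) (Function.uncurry v) (Set.univ ×ˢ Set.Icc 0 T))
    (hupde : ∀ x : ℝ, ∀ t ∈ Set.Icc 0 T,
      deriv (fun s => u x s) t = -(u x t) * iteratedDeriv 5 (fun y => u y t) x)
    (hvpde : ∀ x : ℝ, ∀ t ∈ Set.Icc 0 T,
      deriv (fun s => v x s) t = -(v x t) * iteratedDeriv 5 (fun y => v y t) x)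
    (hubd : ∀ x : ℝ, ∀ t ∈ Set.Icc 0 T, 1/C ≤ u x t ∧ u x t ≤ C)
    (hvbd : ∀ x : ℝ, ∀ t ∈ Set.Icc 0 T, 1/C ≤ v x t ∧ v x t ≤ C)
    (hut : ∀ x : ℝ, ∀ t ∈ Set.Icc 0 T, |deriv (fun s => u x s) t| ≤ M)
    (hvx : ∀ x : ℝ, ∀ t ∈ Set.Icc 0 T, |iteratedDeriv 5 (fun y => v y t) x| ≤ M)
    (h0 : ∀ x : ℝ, u x 0 = v x 0)
    (hsupp : ∀ t ∈ Set.Icc 0 T, ∀ x ∉ K, u x t = v x t) :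
    ∀ x : ℝ, ∀ t ∈ Set.Icc 0 T, u x t = v x t := by
  have h5top : ((5 : ℕ) : WithTop ℕ∞) ≤ ((⊤ : ℕ∞) : WithTop ℕ∞) :=
    WithTop.coe_le_coe.2 (le_top : ((5 : ℕ) : ℕ∞) ≤ ⊤)
  have hC0 : 0 < C := by linarith
  have hupos : ∀ x, ∀ t ∈ Icc 0 T, 0 < u x t := fun x t ht =>
    lt_of_lt_of_le (by positivity) (hubd x t ht).1
  have huinv : ∀ x, ∀ t ∈ Icc 0 T, (u x t)⁻¹ ≤ C := by
    intro x t ht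
    have := inv_anti₀ (by positivity) (hubd x t ht).1
    simpa using this
  have hvpos : ∀ x, ∀ t ∈ Icc 0 T, 0 < v x t := fun x t ht =>
    lt_of_lt_of_le (by positivity) (hvbd x t ht).1
  have hxs : ∀ f : ℝ → ℝ → ℝ,
      ContDiffOn ℝ (⊤ : ℕ∞) (Function.uncurry f) (Set.univ ×ˢ Set.Icc 0 T) →
      ∀ t ∈ Icc 0 T, ContDiff ℝ (⊤ : ℕ∞) (fun x => f x t) := by
    intro f hf t ht
    rw [← contDiffOn_univ]
    exact hf.comp (g := Function.uncurry f) (f := fun x : ℝ => (x, t))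
      (by fun_prop) (fun x _ => ⟨mem_univ _, ht⟩)
  have hts : ∀ f : ℝ → ℝ → ℝ,
      ContDiffOn ℝ (⊤ : ℕ∞) (Function.uncurry f) (Set.univ ×ˢ Set.Icc 0 T) →
      ∀ x, ContDiffOn ℝ (⊤ : ℕ∞) (fun t => f x t) (Icc 0 T) := by
    intro f hf x
    exact hf.comp (g := Function.uncurry f) (f := fun t : ℝ => (x, t))
      (by fun_prop) (fun t ht => ⟨mem_univ _, ht⟩)
  have htd : ∀ f : ℝ → ℝ → ℝ,
      ContDiffOn ℝ (⊤ : ℕ∞) (Function.uncurry f) (Set.univ ×ˢ Set.Icc 0 T) →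
      ∀ x, ∀ t ∈ Ioo 0 T, HasDerivAt (fun t => f x t) (deriv (fun t => f x t) t) t := by
    intro f hf x t ht
    exact ((hts f hf x).differentiableOn (by simp) |>.differentiableAt
      (Icc_mem_nhds ht.1 ht.2)).hasDerivAt
  obtain ⟨r, hr⟩ := hK.isBounded.subset_closedBall (0 : ℝ)
  set R : ℝ := |r| + 1 with hR
  have hRpos : 0 < R := by positivity
  have hKR : ∀ x ∈ K, |x| < R := by
    intro x hx
    have h1 : |x| ≤ r := by simpa using hr hx
    linarith [le_abs_self r]
  have hRK : R ∉ K := fun h => by simpa [abs_of_pos hRpos] using hKR _ h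
  have hRK' : -R ∉ K := fun h => by simpa [abs_of_pos hRpos] using hKR _ h
  have hwz : ∀ t ∈ Icc 0 T, ∀ c ∉ K, (fun x => u x t - v x t) =ᶠ[𝓝 c] fun _ => 0 := by
    intro t ht c hc
    filter_upwards [hK.isClosed.isOpen_compl.mem_nhds hc] with x hx
    rw [hsupp t ht x hx, sub_self]
  set F : ℝ → ℝ → ℝ := fun t x => (u x t - v x t) ^ 2 / u x t with hF
  set F' : ℝ → ℝ → ℝ := fun t x =>
    2 * (u x t - v x t) * (deriv (fun s => u x s) t - deriv (fun s => v x s) t) / u x t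
      - (u x t - v x t) ^ 2 * deriv (fun s => u x s) t / (u x t) ^ 2 with hF'
  set E : ℝ → ℝ := fun t => ∫ x in (-R)..R, F t x with hE
  set L : ℝ := 2 * M + M * C with hL
  have hwabs : ∀ x, ∀ t ∈ Icc 0 T, |u x t - v x t| ≤ C := by
    intro x t ht
    rw [abs_le]
    constructor <;> linarith [hupos x t ht, hvpos x t ht, (hubd x t ht).2, (hvbd x t ht).2]
  have hFcont : ∀ t ∈ Icc 0 T, Continuous (F t) := by
    intro t ht
    exact (((hxs u hu t ht).continuous.sub (hxs v hv t ht).continuous).pow 2).div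
      (hxs u hu t ht).continuous fun x => (hupos x t ht).ne'
  have hFnn : ∀ t ∈ Icc 0 T, ∀ x, 0 ≤ F t x := fun t ht x =>
    div_nonneg (sq_nonneg _) (hupos x t ht).le
  have hw2 : ∀ x, ∀ t ∈ Icc 0 T, (u x t - v x t) ^ 2 ≤ C ^ 2 := fun x t ht =>
    sq_le_sq' (abs_le.1 (hwabs x t ht)).1 (abs_le.1 (hwabs x t ht)).2
  have hFbd : ∀ t ∈ Icc 0 T, ∀ x, ‖F t x‖ ≤ C ^ 2 * C := by
    intro t ht x
    rw [Real.norm_of_nonneg (hFnn t ht x)]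
    simp only [hF, div_eq_mul_inv]
    exact mul_le_mul (hw2 x t ht) (huinv x t ht) (inv_nonneg.2 (hupos x t ht).le) (by positivity)
  have hEcont : ContinuousOn E (Icc 0 T) := by
    intro t ht
    refine intervalIntegral.continuousWithinAt_of_dominated_interval
      (bound := fun _ => C ^ 2 * C) ?_ ?_ intervalIntegrable_const ?_
    · filter_upwards [self_mem_nhdsWithin] with s hs
      exact (hFcont s hs).aestronglyMeasurable
    · filter_upwards [self_mem_nhdsWithin] with s hs
      exact Filter.Eventually.of_forall fun x _ => hFbd s hs x
    · refine Filter.Eventually.of_forall fun x _ => ?_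
      exact ((((hts u hu x).continuousOn t ht).sub ((hts v hv x).continuousOn t ht)).pow 2).div
        ((hts u hu x).continuousOn t ht) (hupos x t ht).ne'
  have hi5 : ∀ f : ℝ → ℝ → ℝ,
      ContDiffOn ℝ (⊤ : ℕ∞) (Function.uncurry f) (Set.univ ×ˢ Set.Icc 0 T) →
      ∀ t ∈ Icc 0 T, Continuous (iteratedDeriv 5 fun x => f x t) := fun f hf t ht =>
    (hxs f hf t ht).continuous_iteratedDeriv 5 h5top
  -- Continuity in `x` of the time derivatives is read off from the equations.
  have hF'cont : ∀ t ∈ Icc 0 T, Continuous (F' t) := by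
    intro t ht
    have cu := (hxs u hu t ht).continuous
    have cv := (hxs v hv t ht).continuous
    have dcu : Continuous fun x => deriv (fun s => u x s) t := by
      simp only [hupde _ t ht]
      exact cu.neg.mul (hi5 u hu t ht)
    have dcv : Continuous fun x => deriv (fun s => v x s) t := by
      simp only [hvpde _ t ht]
      exact cv.neg.mul (hi5 v hv t ht)
    exact (((continuous_const.mul (cu.sub cv)).mul (dcu.sub dcv)).div cu
      fun x => (hupos x t ht).ne').sub ((((cu.sub cv).pow 2).mul dcu).div (cu.pow 2)
      fun x => pow_ne_zero 2 (hupos x t ht).ne')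
  have hvt : ∀ x, ∀ t ∈ Icc 0 T, |deriv (fun s => v x s) t| ≤ C * M := by
    intro x t ht
    rw [hvpde x t ht, abs_mul, abs_neg, abs_of_pos (hvpos x t ht)]
    exact mul_le_mul (hvbd x t ht).2 (hvx x t ht) (abs_nonneg _) hC0.le
  have hF'bd : ∀ t ∈ Icc 0 T, ∀ x, ‖F' t x‖ ≤ 2 * C * (M + C * M) * C + C ^ 2 * M * C ^ 2 := by
    intro t ht x
    have hinv0 : 0 ≤ (u x t)⁻¹ := inv_nonneg.2 (hupos x t ht).le
    have hinv := huinv x t ht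
    simp only [hF', div_eq_mul_inv, ← inv_pow]
    refine (norm_sub_le _ _).trans (add_le_add ?_ ?_)
    · rw [Real.norm_eq_abs, abs_mul, abs_mul, abs_mul, abs_two, abs_of_nonneg hinv0]
      have h1 := hwabs x t ht
      have h2 := (abs_sub (deriv (fun s => u x s) t) (deriv (fun s => v x s) t)).trans
        (add_le_add (hut x t ht) (hvt x t ht))
      gcongr
    · rw [Real.norm_eq_abs, abs_mul, abs_mul, abs_of_nonneg (sq_nonneg _),
        abs_of_nonneg (pow_nonneg hinv0 2)]
      have h1 := hw2 x t ht
      have h2 := hut x t ht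
      gcongr
  have hEd : ∀ t ∈ Ioo 0 T, HasDerivAt E (∫ x in (-R)..R, F' t x) t := by
    intro t ht
    have ht' := Ioo_subset_Icc_self ht
    refine (intervalIntegral.hasDerivAt_integral_of_dominated_loc_of_deriv_le
      (F := F) (F' := F') (s := Ioo 0 T)
      (bound := fun _ => 2 * C * (M + C * M) * C + C ^ 2 * M * C ^ 2)
      (Ioo_mem_nhds ht.1 ht.2) ?_ ((hFcont t ht').intervalIntegrable _ _)
      (hF'cont t ht').aestronglyMeasurable ?_ intervalIntegrable_const ?_).2
    · filter_upwards [Ioo_mem_nhds ht.1 ht.2] with s hs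
      exact (hFcont s (Ioo_subset_Icc_self hs)).aestronglyMeasurable
    · exact Filter.Eventually.of_forall fun x _ s hs => hF'bd s (Ioo_subset_Icc_self hs) x
    · refine Filter.Eventually.of_forall fun x _ s hs => ?_
      have hne := (hupos x s (Ioo_subset_Icc_self hs)).ne'
      have := ((((htd u hu x s hs).sub (htd v hv x s hs)).pow 2).div (htd u hu x s hs) hne)
      refine this.congr_deriv ?_
      simp only [hF', Pi.sub_apply, Pi.pow_apply]
      field_simp
      norm_num
      ring
  have hEle : ∀ t ∈ Ioo 0 T, ∫ x in (-R)..R, F' t x ≤ L * E t := by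
    intro t ht
    have ht' := Ioo_subset_Icc_self ht
    have hwsm := (hxs u hu t ht').sub (hxs v hv t ht')
    have hzero := integral_mul_iteratedDeriv_five_eq_zero hwsm
      (hwz t ht' (-R) hRK') (hwz t ht' R hRK)
    have hwc : Continuous fun x => (u x t - v x t) * iteratedDeriv 5 (fun y => u y t - v y t) x :=
      hwsm.continuous.mul (hwsm.continuous_iteratedDeriv 5 h5top)
    have hmono : ∫ x in (-R)..R, F' t x ≤ ∫ x in (-R)..R,
        ((-2) * ((u x t - v x t) * iteratedDeriv 5 (fun y => u y t - v y t) x) + L * F t x) := by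
      refine intervalIntegral.integral_mono_on (by linarith)
        ((hF'cont t ht').intervalIntegrable _ _)
        (((continuous_const.mul hwc).add
          (continuous_const.mul (hFcont t ht'))).intervalIntegrable _ _) ?_
      intro x _
      have h5 : iteratedDeriv 5 (fun y => u y t - v y t) x
          = iteratedDeriv 5 (fun y => u y t) x - iteratedDeriv 5 (fun y => v y t) x :=
        iteratedDeriv_fun_sub
          ((hxs u hu t ht').contDiffAt.of_le h5top)
          ((hxs v hv t ht').contDiffAt.of_le h5top)
      have hpos := hupos x t ht'
      have hid : F' t x = (-2) * ((u x t - v x t) * iteratedDeriv 5 (fun y => u y t - v y t) x)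
          + (-2 * iteratedDeriv 5 (fun y => v y t) x
            - deriv (fun s => u x s) t * (u x t)⁻¹) * F t x := by
        simp only [hF', hF, h5, hvpde x t ht', hupde x t ht']
        field_simp
        ring
      rw [hid]
      have hcoef : -2 * iteratedDeriv 5 (fun y => v y t) x
          - deriv (fun s => u x s) t * (u x t)⁻¹ ≤ L := by
        have h1 := (abs_le.1 (hvx x t ht')).1
        have h2 : -(deriv (fun s => u x s) t) * (u x t)⁻¹ ≤ M * C :=
          mul_le_mul (by linarith [(abs_le.1 (hut x t ht')).1]) (huinv x t ht')
            (inv_nonneg.2 hpos.le) hM.le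
        simp only [hL]
        linarith
      linarith [mul_le_mul_of_nonneg_right hcoef (hFnn t ht' x)]
    rw [intervalIntegral.integral_add ((hwc.intervalIntegrable _ _).const_mul _)
      (((hFcont t ht').intervalIntegrable _ _).const_mul _),
      intervalIntegral.integral_const_mul, intervalIntegral.integral_const_mul] at hmono
    rw [hzero, mul_zero, zero_add] at hmono
    exact hmono
  -- Gronwall by an integrating factor, which needs no derivative of `E` at the endpoints.
  have hGd : ∀ t ∈ Ioo 0 T, HasDerivAt (fun t => Real.exp (-L * t) * E t)
      (Real.exp (-L * t) * (-L) * E t + Real.exp (-L * t) * ∫ x in (-R)..R, F' t x) t := by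
    intro t ht
    have h1 : HasDerivAt (fun t => Real.exp (-L * t)) (Real.exp (-L * t) * (-L)) t := by
      simpa using ((hasDerivAt_id t).const_mul (-L)).exp
    exact h1.mul (hEd t ht)
  have hanti : AntitoneOn (fun t => Real.exp (-L * t) * E t) (Icc 0 T) := by
    refine antitoneOn_of_deriv_nonpos (convex_Icc 0 T)
      ((by fun_prop : Continuous fun t : ℝ => Real.exp (-L * t)).continuousOn.mul hEcont) ?_ ?_
    · rw [interior_Icc]
      exact fun t ht => (hGd t ht).differentiableAt.differentiableWithinAt
    · rw [interior_Icc]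
      intro t ht
      rw [(hGd t ht).deriv]
      nlinarith [mul_le_mul_of_nonneg_left (hEle t ht) (Real.exp_pos (-L * t)).le]
  intro x t ht
  by_cases hx : x ∈ K
  swap
  · exact hsupp t ht x hx
  by_contra hne
  have hEpos : 0 < E t := by
    refine intervalIntegral.integral_pos (by linarith) (hFcont t ht).continuousOn
      (fun y _ => hFnn t ht y) ⟨x, ?_, ?_⟩
    · exact ⟨(abs_lt.1 (hKR x hx)).1.le, (abs_lt.1 (hKR x hx)).2.le⟩
    · have : u x t - v x t ≠ 0 := sub_ne_zero.2 hne
      have := hupos x t ht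
      positivity
  have hE0 : E 0 = 0 := by
    simp [hE, hF, h0]
  have := hanti ⟨le_rfl, hT.le⟩ ht ht.1
  simp only [hE0, mul_zero] at this
  linarith [mul_pos (Real.exp_pos (-L * t)) hEpos]
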